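/- The swapped-statistic universal confidence set is finite-sample valid: for every n ∈ ℕ and every significance level a ∈ (0,1), Pr_{θ*}(θ* ∈ C̄_n^a) ≥ 1 − a, where C̄_n^a = {θ ∈ Θ : Ū_{α,β,n}(θ) ≤ 1/a} and Ū_{α,β,n}(θ) = (U_{α,β,n}^0(θ) + U_{α,β,n}^1(θ))/2. -/

import Mathlib

open MeasureTheory ENNReal
open scoped BigOperators Classical

noncomputable section

/-- Division in `ℝ≥0∞` with the convention that the ratio is `0` when the
denominator is `0`. -/
def safeDiv (a b : ℝ≥0∞) : ℝ≥0∞ := if b = 0 then 0 else a / b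

variable {d : ℕ} {π : Fin d → Type*} [∀ i, MeasurableSpace (π i)]

/-- The marginal density on the coordinates in `S`, obtained by integrating a density
out over the coordinates in `[d] \ S` (as a function of the full vector, depending only
on the coordinates in `S`). -/
def marginal (μ : ∀ i, Measure (π i)) (S : Finset (Fin d))
    (f : (∀ i, π i) → ℝ≥0∞) : (∀ i, π i) → ℝ≥0∞ :=
  MeasureTheory.lmarginal μ Sᶜ f

/-- The conditional density of the coordinates in `T1` given the coordinates in `T2`,
with the convention that the ratio is `0` when the denominator is `0`. -/
def condDens (μ : ∀ i, Measure (π i)) (T1 T2 : Finset (Fin d))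
    (f : (∀ i, π i) → ℝ≥0∞) (x : ∀ i, π i) : ℝ≥0∞ :=
  safeDiv (marginal μ (T1 ∪ T2) f x) (marginal μ T2 f x)

/-- `𝕊_d`: the nonempty subsets of `[d]`. -/
abbrev Sd (d : ℕ) := {S : Finset (Fin d) // S.Nonempty}

/-- `𝕋_d`: ordered pairs of disjoint nonempty subsets of `[d]`. -/
abbrev Td (d : ℕ) := {T : Finset (Fin d) × Finset (Fin d) //
  T.1.Nonempty ∧ T.2.Nonempty ∧ Disjoint T.1 T.2}

/-- The individual composite likelihood
`p_{α,β}(x;θ) = ∏_S p_S(x_S;θ)^(α_S/γ) ∏_T p(x_{T←}|x_{T→};θ)^(β_T/γ)`,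
where `f = p(·;θ)` is the joint density. -/
def compLik (μ : ∀ i, Measure (π i)) (α : Sd d → ℝ) (β : Td d → ℝ) (γ : ℝ)
    (f : (∀ i, π i) → ℝ≥0∞) (x : ∀ i, π i) : ℝ≥0∞ :=
  (∏ S : Sd d, marginal μ S.1 f x ^ (α S / γ)) *
  (∏ T : Td d, condDens μ T.1.1 T.1.2 f x ^ (β T / γ))


theorem sd_eq (a b : ℝ≥0∞) : safeDiv a b = a * safeDiv 1 b := by
  unfold safeDiv; split_ifs <;> simp [div_eq_mul_inv]

theorem sd_meas : Measurable (safeDiv 1) := by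
  unfold safeDiv
  exact Measurable.ite (measurableSet_singleton 0) measurable_const (by fun_prop)

theorem sd_measurable {A : Type*} [MeasurableSpace A] {f g : A → ℝ≥0∞} (hf : Measurable f)
    (hg : Measurable g) : Measurable fun x => safeDiv (f x) (g x) := by
  simp_rw [sd_eq (f _)]
  exact hf.mul (sd_meas.comp hg)

theorem sd_self (a : ℝ≥0∞) : safeDiv a a ≤ 1 := by
  unfold safeDiv; split_ifs
  · simp
  · exact ENNReal.div_self_le_one

theorem mul_sd (a b : ℝ≥0∞) : b * safeDiv a b ≤ a := by
  unfold safeDiv; split_ifs with h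
  · simp
  · exact ENNReal.mul_div_le

theorem mul_sd_sd (c F G : ℝ≥0∞) : F * safeDiv c (safeDiv F G) ≤ G * c := by
  by_cases hG : G = 0
  · simp [safeDiv, hG]
  by_cases hG' : G = ∞
  · simp [safeDiv, hG']
  by_cases hF : F = 0
  · simp [safeDiv, hF]
  by_cases hF' : F = ∞
  · simp [safeDiv, hF', hG, hG', ENNReal.top_div_of_ne_top]
  have h : F / G ≠ 0 := by simp [ENNReal.div_eq_zero_iff, hF, hG']
  simp only [safeDiv, hG, h, if_false]
  rw [div_eq_mul_inv c, ENNReal.inv_div (Or.inl hG') (Or.inl hG), div_eq_mul_inv]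
  calc F * (c * (G * F⁻¹)) = (F * F⁻¹) * (G * c) := by ring
    _ = G * c := by rw [ENNReal.mul_inv_cancel hF hF', one_mul]
    _ ≤ _ := le_rfl

theorem sd_prod {ι : Type*} (s : Finset ι) (f g : ι → ℝ≥0∞) :
    safeDiv (∏ i ∈ s, f i) (∏ i ∈ s, g i) ≤ ∏ i ∈ s, safeDiv (f i) (g i) := by
  by_cases h : ∏ i ∈ s, g i = 0
  · simp [safeDiv, h]
  have h' : ∀ i ∈ s, g i ≠ 0 := Finset.prod_ne_zero_iff.1 h
  rw [safeDiv, if_neg h, div_eq_mul_inv, ENNReal.prod_inv_distrib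
    (fun i hi j hj _ => Or.inl (h' i hi)), ← Finset.prod_mul_distrib]
  refine (Finset.prod_congr rfl fun i hi => ?_).le
  rw [safeDiv, if_neg (h' i hi), div_eq_mul_inv]

theorem sd_rpow (a b : ℝ≥0∞) {w : ℝ} (hw : 0 ≤ w) :
    safeDiv (a ^ w) (b ^ w) ≤ safeDiv a b ^ w := by
  by_cases h : b ^ w = 0
  · simp [safeDiv, h]
  rcases hw.eq_or_lt with rfl | hw'
  · simp [safeDiv]
  have hb : b ≠ 0 := by
    rintro rfl; exact h (ENNReal.zero_rpow_of_pos hw')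
  rw [safeDiv, if_neg h, safeDiv, if_neg hb, ENNReal.div_rpow_of_nonneg _ _ hw]

section helpers
variable (μ : ∀ i, Measure (π i)) [∀ i, SigmaFinite (μ i)]

theorem lmarg_mul_const (s : Finset (Fin d)) (F h : (∀ i, π i) → ℝ≥0∞) (hF : Measurable F)
    (hh : ∀ x y, (∀ i ∉ s, x i = y i) → h x = h y) :
    lmarginal μ s (fun x => F x * h x) = fun x => lmarginal μ s F x * h x := by
  ext x
  unfold lmarginal
  rw [← lintegral_mul_const]
  · refine lintegral_congr fun y => ?_
    change F _ * h _ = F _ * h x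
    congr 1
    apply hh
    intro i hi
    simp [Function.updateFinset, hi]
  · exact hF.comp (measurable_updateFinset)

theorem marginal_congr' (S T : Finset (Fin d)) (hST : S ⊆ T) (f : (∀ i, π i) → ℝ≥0∞)
    (x y : ∀ i, π i) (h : ∀ i ∉ Tᶜ, x i = y i) : marginal μ S f x = marginal μ S f y := by
  apply lmarginal_congr
  intro i hi
  apply h
  simp at hi ⊢
  exact hST hi

theorem marginal_meas (S : Finset (Fin d)) {f : (∀ i, π i) → ℝ≥0∞} (hf : Measurable f) :
    Measurable (marginal μ S f) := hf.lmarginal μ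

theorem int_eq (S : Finset (Fin d)) {f : (∀ i, π i) → ℝ≥0∞} (hf : Measurable f)
    (x : ∀ i, π i) : ∫⁻ x, f x ∂(Measure.pi μ) = lmarginal μ S (marginal μ S f) x := by
  rw [lintegral_eq_lmarginal_univ x, ← Finset.union_compl S,
    lmarginal_union μ f hf disjoint_compl_right]
  rfl

theorem int_mul (S : Finset (Fin d)) {f h : (∀ i, π i) → ℝ≥0∞} (hf : Measurable f)
    (hh : Measurable h) (hd : ∀ x y, (∀ i ∉ Sᶜ, x i = y i) → h x = h y) (x : ∀ i, π i) :
    ∫⁻ x, f x * h x ∂(Measure.pi μ) = lmarginal μ S (fun x => marginal μ S f x * h x) x := by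
  rw [int_eq μ S (f := fun x => f x * h x) (hf.mul hh) x]
  congr 1
  exact lmarg_mul_const μ _ f h hf hd

theorem bound_S (S : Finset (Fin d)) {f g : (∀ i, π i) → ℝ≥0∞} (hf : Measurable f)
    (hg : Measurable g) (hg1 : ∫⁻ x, g x ∂(Measure.pi μ) = 1) (x : ∀ i, π i) :
    ∫⁻ x, f x * safeDiv (marginal μ S g x) (marginal μ S f x) ∂(Measure.pi μ) ≤ 1 := by
  rw [int_mul μ S hf (sd_measurable (marginal_meas μ S hg) (marginal_meas μ S hf)) _ x]
  · rw [← hg1, int_eq μ S hg x]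
    exact lmarginal_mono (fun x => mul_sd _ _) x
  · intro x y h
    rw [marginal_congr' μ S S le_rfl g x y h, marginal_congr' μ S S le_rfl f x y h]

theorem condDens_meas (S T : Finset (Fin d)) {f : (∀ i, π i) → ℝ≥0∞} (hf : Measurable f) :
    Measurable (condDens μ S T f) :=
  sd_measurable (marginal_meas μ _ hf) (marginal_meas μ _ hf)

theorem bound_T (S T : Finset (Fin d)) (hST : Disjoint S T)
    {f g : (∀ i, π i) → ℝ≥0∞} (hf : Measurable f)
    (hg : Measurable g) (hf1 : ∫⁻ x, f x ∂(Measure.pi μ) = 1) (x : ∀ i, π i) :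
    ∫⁻ x, f x * safeDiv (condDens μ S T g x) (condDens μ S T f x) ∂(Measure.pi μ) ≤ 1 := by
  have hc : ∀ f : (∀ i, π i) → ℝ≥0∞, ∀ x y : ∀ i, π i, (∀ i ∉ (S ∪ T)ᶜ, x i = y i) →
      condDens μ S T f x = condDens μ S T f y := by
    intro f x y h
    rw [condDens, condDens, marginal_congr' μ (S ∪ T) (S ∪ T) le_rfl f x y h,
      marginal_congr' μ T (S ∪ T) Finset.subset_union_right f x y h]
  rw [int_mul μ (S ∪ T) hf (sd_measurable (condDens_meas μ S T hg) (condDens_meas μ S T hf)) _ x]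
  swap
  · intro x y h
    rw [hc g x y h, hc f x y h]
  have hS : ∀ f : (∀ i, π i) → ℝ≥0∞, ∀ x y : ∀ i, π i, (∀ i ∉ S, x i = y i) →
      marginal μ T f x = marginal μ T f y := by
    intro f x y h
    apply lmarginal_congr
    intro i hi
    apply h
    simp at hi
    exact fun h => Finset.disjoint_left.1 hST h hi
  have hgT : lmarginal μ S (marginal μ (S ∪ T) g) = marginal μ T g := by
    unfold marginal
    rw [← lmarginal_union μ g hg]
    · congr 1
      ext i
      have : i ∈ S → i ∉ T := fun h => Finset.disjoint_left.1 hST h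
      simp
      tauto
    · rw [Finset.disjoint_left]; intro i hi; simp [hi]
  calc _ ≤ lmarginal μ (S ∪ T) (fun x => marginal μ T f x * condDens μ S T g x) x :=
        lmarginal_mono (fun x => mul_sd_sd _ _ _) x
    _ = lmarginal μ T (lmarginal μ S (fun x => marginal μ (S ∪ T) g x *
          (marginal μ T f x * safeDiv 1 (marginal μ T g x)))) x := by
        rw [← lmarginal_union' μ _ _ hST]
        · congr 1
          ext x
          rw [condDens, sd_eq]; ring
        · exact (marginal_meas μ _ hg).mul ((marginal_meas μ _ hf).mul
            (sd_meas.comp (marginal_meas μ _ hg)))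
    _ ≤ lmarginal μ T (marginal μ T f) x := by
        refine lmarginal_mono ?_ x
        rw [lmarg_mul_const μ S _ _ (marginal_meas μ _ hg), hgT]
        · intro x
          calc _ = marginal μ T f x * safeDiv (marginal μ T g x) (marginal μ T g x) := by
                rw [sd_eq (marginal μ T g x)]; ring
            _ ≤ marginal μ T f x * 1 := by gcongr; exact sd_self _
            _ = _ := mul_one _
        · intro x y h
          rw [hS f x y h, hS g x y h]
    _ = 1 := by rw [← int_eq μ T hf x, hf1]

theorem compLik_bound (α : Sd d → ℝ) (β : Td d → ℝ)
    (hα : ∀ S, 0 ≤ α S) (hβ : ∀ T, 0 ≤ β T)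
    (γ : ℝ) (hγ : γ = ∑ S, α S + ∑ T, β T) (hγpos : 0 < γ)
    {f g : (∀ i, π i) → ℝ≥0∞} (hf : Measurable f) (hg : Measurable g)
    (hf1 : ∫⁻ x, f x ∂(Measure.pi μ) = 1) (hg1 : ∫⁻ x, g x ∂(Measure.pi μ) = 1) :
    ∫⁻ x, safeDiv (compLik μ α β γ g x) (compLik μ α β γ f x) ∂((Measure.pi μ).withDensity f)
      ≤ 1 := by
  rcases isEmpty_or_nonempty (∀ i, π i) with h | ⟨⟨x0⟩⟩
  · simp
  let q : ((∀ i, π i) → ℝ≥0∞) → (Sd d ⊕ Td d) → (∀ i, π i) → ℝ≥0∞ := fun f =>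
    Sum.elim (fun S => marginal μ S.1 f) (fun T => condDens μ T.1.1 T.1.2 f)
  let w : (Sd d ⊕ Td d) → ℝ := Sum.elim (fun S => α S / γ) (fun T => β T / γ)
  have hq : ∀ f x, compLik μ α β γ f x = ∏ i, q f i x ^ w i := by
    intro f x
    simp [compLik, q, w, Fintype.prod_sum_type]
  have hqm : ∀ f, Measurable f → ∀ i, Measurable (q f i) := by
    rintro f hf (S | T)
    · exact marginal_meas μ _ hf
    · exact condDens_meas μ _ _ hf
  have hw : ∀ i, 0 ≤ w i := by
    rintro (S | T)
    · exact div_nonneg (hα S) hγpos.le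
    · exact div_nonneg (hβ T) hγpos.le
  have hw1 : ∑ i, w i = 1 := by
    simp only [w, Fintype.sum_sum_type, Sum.elim_inl, Sum.elim_inr, ← Finset.sum_div]
    rw [← add_div, ← hγ, div_self hγpos.ne']
  have hm : ∀ i, Measurable (fun x => safeDiv (q g i x) (q f i x)) := fun i =>
    sd_measurable (hqm g hg i) (hqm f hf i)
  calc _ ≤ ∫⁻ x, ∏ i, safeDiv (q g i x) (q f i x) ^ w i ∂((Measure.pi μ).withDensity f) := by
        refine lintegral_mono fun x => ?_
        simp only [hq]
        exact (sd_prod _ _ _).trans (Finset.prod_le_prod' fun i _ => sd_rpow _ _ (hw i))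
    _ ≤ ∏ i, (∫⁻ x, safeDiv (q g i x) (q f i x) ∂((Measure.pi μ).withDensity f)) ^ w i :=
        ENNReal.lintegral_prod_norm_pow_le _ (fun i _ => (hm i).aemeasurable) hw1 fun i _ => hw i
    _ ≤ 1 := by
        refine Finset.prod_le_one' fun i _ => ENNReal.rpow_le_one ?_ (hw i)
        rw [lintegral_withDensity_eq_lintegral_mul _ hf (hm i)]
        rcases i with S | T
        · exact bound_S μ S.1 hf hg hg1 x0
        · exact bound_T μ T.1.1 T.1.2 T.2.2.2 hf hg hf1 x0

theorem marginal_joint {Θ : Type*} [MeasurableSpace Θ] (p : Θ → (∀ i, π i) → ℝ≥0∞)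
    (hp : Measurable (Function.uncurry p)) (S : Finset (Fin d)) :
    Measurable fun z : Θ × (∀ i, π i) => marginal μ S (p z.1) z.2 := by
  unfold marginal lmarginal
  refine Measurable.lintegral_prod_right'
    (f := fun z : (Θ × (∀ i, π i)) × _ => p z.1.1 (Function.updateFinset z.1.2 Sᶜ z.2)) ?_
  exact hp.comp ((measurable_fst.comp measurable_fst).prodMk
    (measurable_updateFinset'.comp ((measurable_snd.comp measurable_fst).prodMk measurable_snd)))

theorem compLik_joint {Θ : Type*} [MeasurableSpace Θ] (p : Θ → (∀ i, π i) → ℝ≥0∞)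
    (hp : Measurable (Function.uncurry p)) (α : Sd d → ℝ) (β : Td d → ℝ) (γ : ℝ) :
    Measurable fun z : Θ × (∀ i, π i) => compLik μ α β γ (p z.1) z.2 := by
  unfold compLik condDens
  refine Measurable.mul ?_ ?_
  · exact Finset.measurable_prod _ fun S _ => (marginal_joint μ p hp _).pow_const _
  · exact Finset.measurable_prod _ fun S _ =>
      (sd_measurable (marginal_joint μ p hp _) (marginal_joint μ p hp _)).pow_const _

theorem U_meas {Θ : Type*} [MeasurableSpace Θ] (p : Θ → (∀ i, π i) → ℝ≥0∞)
    (hp : Measurable (Function.uncurry p)) (α : Sd d → ℝ) (β : Td d → ℝ) (γ : ℝ)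
    (θ : Θ) (n : ℕ) (t : (Fin n → ∀ i, π i) → Θ) (ht : Measurable t) :
    Measurable fun z : (Fin n → ∀ i, π i) × (Fin n → ∀ i, π i) =>
      safeDiv (∏ j : Fin n, compLik μ α β γ (p (t z.1)) (z.2 j))
        (∏ j : Fin n, compLik μ α β γ (p θ) (z.2 j)) := by
  refine sd_measurable ?_ ?_
  · refine Finset.measurable_prod _ fun j _ => ?_
    exact (compLik_joint μ p hp α β γ).comp ((ht.comp measurable_fst).prodMk
      ((measurable_pi_apply j).comp measurable_snd))
  · refine Finset.measurable_prod _ fun j _ => ?_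
    exact (compLik_joint μ p hp α β γ).comp (measurable_const.prodMk
      ((measurable_pi_apply j).comp measurable_snd))

theorem prod_bound {A : Type*} [MeasurableSpace A] (P : Measure A) [IsProbabilityMeasure P]
    (n : ℕ) (r : A → ℝ≥0∞) (hr : Measurable r) (h : ∫⁻ x, r x ∂P ≤ 1) :
    ∫⁻ x, ∏ j, r (x j) ∂(Measure.pi fun _ : Fin n => P) ≤ 1 := by
  have hi : ProbabilityTheory.iIndepFun (fun (j : Fin n) (x : Fin n → A) => r (x j))
      (Measure.pi fun _ : Fin n => P) :=
    ProbabilityTheory.iIndepFun_pi (X := fun _ => r) (fun _ => hr.aemeasurable)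
  rw [ProbabilityTheory.lintegral_prod_eq_prod_lintegral_of_indepFun Finset.univ _ hi
    (fun j => hr.comp (measurable_pi_apply j))]
  refine Finset.prod_le_one' fun j _ => ?_
  rwa [(measurePreserving_eval (fun _ : Fin n => P) j).lintegral_comp hr]

end helpers

/-- The swapped-statistic universal confidence set is finite-sample
valid: for every `n ∈ ℕ` and every significance level `a ∈ (0,1)`,
`Pr_{θ*}(θ* ∈ C̄_n^a) ≥ 1 − a`, where `C̄_n^a = {θ : Ū_{α,β,n}(θ) ≤ 1/a}` and
`Ū_{α,β,n}(θ) = (U_{α,β,n}^0(θ) + U_{α,β,n}^1(θ))/2`. -/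
theorem swapped_confidence_set_valid
    {d : ℕ} (hd : 1 ≤ d)
    {π : Fin d → Type*} [∀ i, MeasurableSpace (π i)]
    (μ : ∀ i, Measure (π i)) [∀ i, SigmaFinite (μ i)]
    {Θ : Type*} [MeasurableSpace Θ]
    (p : Θ → (∀ i, π i) → ℝ≥0∞)
    (hp_meas : Measurable (Function.uncurry p))
    (hp_prob : ∀ θ : Θ, ∫⁻ x, p θ x ∂(Measure.pi μ) = 1)
    (α : Sd d → ℝ) (β : Td d → ℝ)
    (hα : ∀ S, 0 ≤ α S) (hβ : ∀ T, 0 ≤ β T)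
    (γ : ℝ) (hγ : γ = ∑ S, α S + ∑ T, β T) (hγpos : 0 < γ)
    {Ω : Type*} [MeasurableSpace Ω]
    (Pr : Measure Ω) [IsProbabilityMeasure Pr]
    (θstar : Θ) (n : ℕ)
    -- the two halves `X_n^0` and `X_n^1` of the i.i.d. sample of size `2n`
    (X0 X1 : Fin n → Ω → (∀ i, π i))
    (hX0 : ∀ j, Measurable (X0 j)) (hX1 : ∀ j, Measurable (X1 j))
    -- the `2n` observations are i.i.d. with density `p(·;θ*)` w.r.t. `μ`
    (hlaw : Measure.map (fun ω => (fun j => X0 j ω, fun j => X1 j ω)) Pr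
      = (Measure.pi fun _ : Fin n => (Measure.pi μ).withDensity (p θstar)).prod
          (Measure.pi fun _ : Fin n => (Measure.pi μ).withDensity (p θstar)))
    -- the estimators `θ̃_n^0`, `θ̃_n^1` are measurable functions of `X_n^0`, `X_n^1` alone
    (t0 t1 : (Fin n → ∀ i, π i) → Θ)
    (ht0 : Measurable t0) (ht1 : Measurable t1)
    (a : ℝ) (ha0 : 0 < a) (ha1 : a < 1) :
    ENNReal.ofReal (1 - a) ≤
      Pr {ω | (safeDiv
            (∏ j : Fin n, compLik μ α β γ (p (t1 fun j' => X1 j' ω)) (X0 j ω))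
            (∏ j : Fin n, compLik μ α β γ (p θstar) (X0 j ω))
          + safeDiv
            (∏ j : Fin n, compLik μ α β γ (p (t0 fun j' => X0 j' ω)) (X1 j ω))
            (∏ j : Fin n, compLik μ α β γ (p θstar) (X1 j ω))) / 2
          ≤ 1 / ENNReal.ofReal a} := by
  have hpm : ∀ θ, Measurable (p θ) := fun θ => hp_meas.of_uncurry_left
  set P := (Measure.pi μ).withDensity (p θstar) with hP
  haveI : IsProbabilityMeasure P := ⟨by
    rw [hP, withDensity_apply _ MeasurableSet.univ, Measure.restrict_univ, hp_prob]⟩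
  let V : ((Fin n → ∀ i, π i) → Θ) → (Fin n → ∀ i, π i) × (Fin n → ∀ i, π i) → ℝ≥0∞ :=
    fun t z => safeDiv (∏ j : Fin n, compLik μ α β γ (p (t z.1)) (z.2 j))
        (∏ j : Fin n, compLik μ α β γ (p θstar) (z.2 j))
  have hV : ∀ t, Measurable t → Measurable (V t) := fun t ht =>
    U_meas μ p hp_meas α β γ θstar n t ht
  have hVb : ∀ t y, ∫⁻ x, V t (y, x) ∂(Measure.pi fun _ : Fin n => P) ≤ 1 := by
    intro t y
    refine le_trans (lintegral_mono fun x => sd_prod _ _ _) ?_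
    have hc : ∀ θ, Measurable (compLik μ α β γ (p θ)) := fun θ =>
      (compLik_joint μ p hp_meas α β γ).comp (measurable_const.prodMk measurable_id)
    exact prod_bound P n (fun x => safeDiv (compLik μ α β γ (p (t y)) x)
      (compLik μ α β γ (p θstar) x)) (sd_measurable (hc _) (hc _))
      (compLik_bound μ α β hα hβ γ hγ hγpos (hpm _) (hpm _) (hp_prob _) (hp_prob _))
  have hX : Measurable (fun ω => ((fun j => X0 j ω, fun j => X1 j ω) :
      (Fin n → ∀ i, π i) × (Fin n → ∀ i, π i))) :=
    (measurable_pi_lambda _ hX0).prodMk (measurable_pi_lambda _ hX1)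
  let W : (Fin n → ∀ i, π i) × (Fin n → ∀ i, π i) → ℝ≥0∞ := fun z => V t1 z.swap + V t0 z
  have hW : Measurable W := ((hV t1 ht1).comp measurable_swap).add (hV t0 ht0)
  have hE : ∫⁻ ω, W (fun j => X0 j ω, fun j => X1 j ω) ∂Pr ≤ 2 := by
    rw [← lintegral_map hW hX, hlaw]
    simp only [W]
    rw [lintegral_add_right _ (hV t0 ht0), ← one_add_one_eq_two]
    gcongr
    · rw [lintegral_prod_symm (fun z => V t1 z.swap) ((hV t1 ht1).comp measurable_swap).aemeasurable]
      refine (lintegral_mono fun y => hVb t1 y).trans ?_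
      simp
    · rw [lintegral_prod _ (hV t0 ht0).aemeasurable]
      refine (lintegral_mono fun y => hVb t0 y).trans ?_
      simp
  have ha : ENNReal.ofReal a ≠ 0 := by simpa using ha0
  let W2 : Ω → ℝ≥0∞ := fun ω => W (fun j => X0 j ω, fun j => X1 j ω) / 2
  have hW2 : Measurable W2 := (hW.comp hX).div_const 2
  have hE2 : ∫⁻ ω, W2 ω ∂Pr ≤ 1 := by
    simp only [W2, div_eq_mul_inv]
    rw [lintegral_mul_const _ (f := fun ω => W (fun j => X0 j ω, fun j => X1 j ω)) (hW.comp hX), ← div_eq_mul_inv]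
    exact (ENNReal.div_le_div_right hE 2).trans ENNReal.div_self_le_one
  change _ ≤ Pr {ω | W2 ω ≤ 1 / ENNReal.ofReal a}
  have hs : MeasurableSet {ω | W2 ω ≤ 1 / ENNReal.ofReal a} := hW2 measurableSet_Iic
  have hM : Pr {ω | W2 ω ≤ 1 / ENNReal.ofReal a}ᶜ ≤ ENNReal.ofReal a := by
    refine (measure_mono (t := {ω | 1 / ENNReal.ofReal a ≤ W2 ω}) ?_).trans
      ((meas_ge_le_lintegral_div hW2.aemeasurable (by simp) (by simpa using ha0)).trans ?_)
    · intro ω h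
      simp only [Set.mem_compl_iff, Set.mem_ofPred_eq, not_le] at h ⊢
      exact h.le
    · refine (ENNReal.div_le_div_right hE2 _).trans ?_
      simp
  rw [ENNReal.ofReal_sub _ ha0.le, ENNReal.ofReal_one, tsub_le_iff_right]
  calc (1 : ℝ≥0∞) = Pr Set.univ := measure_univ.symm
    _ = _ := (measure_add_measure_compl hs).symm
    _ ≤ _ := by gcongr
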